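/- Assume char(F) = 3 and fix 1 ≤ i ≤ d. Let e ∈ M_F be a multihomogeneous element of multidegree (δ_1,…,δ_d) with δ_i < 3 and δ_1 + ⋯ + δ_{i−1} + δ_{i+1} + ⋯ + δ_d > 0, and let π_i(e) ∈ M_F be the result of substituting x_i → 1 and x_i^T → 1 in e (1 being the empty word). If e = 0 in A_{3,d}, then π_i(e) = 0 in A_{3,d}. -/

import Mathlib

open FreeAlgebra MulOpposite

/-- The alphabet: `(k, false)` is the letter `x_{k+1}`, `(k, true)` is `x_{k+1}ᵀ`. -/
abbrev Ltr (d : ℕ) := Fin d × Bool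

/-- The free (unital) associative algebra on the `2d` letters.  The free non-unital
algebra `M_F` sits inside it as the span of the nonempty words. -/
abbrev FA (F : Type) [Field F] (d : ℕ) := FreeAlgebra F (Ltr d)

variable (F : Type) [Field F] (d : ℕ)

/-- The word in the free algebra corresponding to a list of letters
(the empty list gives `1`, the unit). -/
def wordOf (l : List (Ltr d)) : FA F d := (l.map (FreeAlgebra.ι F)).prod

/-- The transpose: the linear anti-automorphism with `x ↦ xᵀ`, `xᵀ ↦ x`. -/
def tp (a : FA F d) : FA F d :=
  ((FreeAlgebra.lift F fun p : Ltr d => op (FreeAlgebra.ι F (p.1, !p.2))) a).unop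

/-- `ā = a - aᵀ`. -/
def bar (a : FA F d) : FA F d := a - tp F d a

/-- `T(a,b,c) = a b̄ c̄ + b̄ aᵀ c̄ + b̄ c̄ a`. -/
def Trel (a b c : FA F d) : FA F d :=
  a * bar F d b * bar F d c + bar F d b * tp F d a * bar F d c + bar F d b * bar F d c * a

/-- The copy of the free non-unital algebra `M_F`, i.e. the span of the nonempty words. -/
def MFsub : Submodule F (FA F d) :=
  Submodule.span F {w | ∃ l : List (Ltr d), l ≠ [] ∧ w = wordOf F d l}

/-- The two-sided ideal such that `A_{3,d} = M_F / (idealA ∩ M_F)`: it is generated by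
`a³` for `a ∈ M_F` together with `T(a,b,c)` for `a, b, c ∈ M_F`.  (Since all generators lie in
`M_F`, its intersection with `M_F` is exactly the two-sided ideal of the non-unital algebra
`M_F` generated by these elements; in fact it is contained in `M_F`.)
An element `u ∈ M_F` is zero in `A_{3,d}` iff `u ∈ idealA F d`. -/
def idealA : TwoSidedIdeal (FA F d) :=
  TwoSidedIdeal.span
    ({x | ∃ a ∈ MFsub F d, x = a ^ 3} ∪
     {x | ∃ a ∈ MFsub F d, ∃ b ∈ MFsub F d, ∃ c ∈ MFsub F d, x = Trel F d a b c})

/-- The substitution `x_i ↦ 1`, `x_iᵀ ↦ 1`, all other letters fixed. -/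
noncomputable def piMap (i : Fin d) : FA F d →ₐ[F] FA F d :=
  FreeAlgebra.lift F fun p : Ltr d => if p.1 = i then 1 else FreeAlgebra.ι F p

/-!
Substitute a central variable `X` for `x_i` and `x_iᵀ`: a word `w` of degree `n` in `x_i` goes to
`π_i(w) Xⁿ`, so `π_i(e)` is the sum of the first three coefficients of the image of `e`.  Hence it
suffices that the substitution carries the ideal of relations into the polynomials whose first three
coefficients lie in that ideal.

This holds because in characteristic 3 the relations survive the adjunction of a unit.  The
expression `T` vanishes as soon as one argument is `1`, since `T(1,b,c) = 3 b̄ c̄` and `bar 1 = 0`;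
being trilinear, it then lies in the ideal for all arguments.  Modulo the ideal `a³` is `ε(a)³`,
with `ε` the augmentation, so cubing is additive and its derivative `a²b + aba + ba²` vanishes.  The
first three coefficients of `p³` are `p₀³`, the derivative at `p₀` towards `p₁`, and the sum of the
derivatives at `p₀` towards `p₂` and at `p₁` towards `p₀`.
-/

section

open Polynomial

section Ring

variable {R : Type*} [Ring R]

/-- The derivative of `a ↦ a³` at `a` in the direction `b`, i.e. the part of `(a + b)³` that is
linear in `b`. -/
def cubeDeriv (a b : R) : R := a * a * b + a * b * a + b * a * a

theorem cubeDeriv_mem_of_add_pow_three_sub_mem [CharP R 3] {I : TwoSidedIdeal R}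
    (hI : ∀ a b : R, (a + b) ^ 3 - a ^ 3 - b ^ 3 ∈ I) (a b : R) : cubeDeriv a b ∈ I := by
  have three_eq_zero : (3 : R) = 0 := CharP.cast_eq_zero R 3
  have polarization : cubeDeriv a b =
      ((a + -b) ^ 3 - a ^ 3 - (-b) ^ 3) - ((a + b) ^ 3 - a ^ 3 - b ^ 3) + 3 * cubeDeriv a b := by
    unfold cubeDeriv
    noncomm_ring
  rw [polarization, three_eq_zero, zero_mul, add_zero]
  exact I.sub_mem (hI a (-b)) (hI a b)

/-- The two-sided ideal of `R[X]` of the polynomials whose coefficients of index less than `N` lie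
in `I`; it is the preimage of the ideal generated by `X ^ N` under `R[X] → (R ⧸ I)[X]`. -/
noncomputable def coeffLTIdeal (I : TwoSidedIdeal R) (N : ℕ) : TwoSidedIdeal R[X] :=
  TwoSidedIdeal.mk' {p | ∀ n < N, p.coeff n ∈ I}
    (fun n _ => by simp)
    (fun hp hq n hn => by rw [coeff_add]; exact I.add_mem (hp n hn) (hq n hn))
    (fun hp n hn => by rw [coeff_neg]; exact I.neg_mem (hp n hn))
    (fun {p q} hq n hn => by
      rw [coeff_mul]
      exact sum_mem fun m hm => I.mul_mem_left _ _
        (hq _ ((Finset.HasAntidiagonal.antidiagonal.snd_le hm).trans_lt hn)))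
    (fun {p q} hp n hn => by
      rw [coeff_mul]
      exact sum_mem fun m hm => I.mul_mem_right _ _
        (hp _ ((Finset.HasAntidiagonal.antidiagonal.fst_le hm).trans_lt hn)))

theorem mem_coeffLTIdeal {I : TwoSidedIdeal R} {N : ℕ} {p : R[X]} :
    p ∈ coeffLTIdeal I N ↔ ∀ n < N, p.coeff n ∈ I :=
  TwoSidedIdeal.mem_mk' _ _ _ _ _ _ _

theorem monomial_mem_coeffLTIdeal {I : TwoSidedIdeal R} {a : R} (ha : a ∈ I) (m N : ℕ) :
    monomial m a ∈ coeffLTIdeal I N := by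
  refine mem_coeffLTIdeal.2 fun n _ => ?_
  rw [coeff_monomial]
  split_ifs
  exacts [ha, I.zero_mem]

theorem coeff_one_pow_three (p : R[X]) :
    (p ^ 3).coeff 1 = cubeDeriv (p.coeff 0) (p.coeff 1) := by
  simp only [pow_succ, pow_zero, one_mul, mul_coeff_one, mul_coeff_zero, cubeDeriv]
  noncomm_ring

theorem coeff_two_pow_three (p : R[X]) :
    (p ^ 3).coeff 2 =
      cubeDeriv (p.coeff 0) (p.coeff 2) + cubeDeriv (p.coeff 1) (p.coeff 0) := by
  have coeff_two_mul (q r : R[X]) : (q * r).coeff 2 =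
      q.coeff 0 * r.coeff 2 + q.coeff 1 * r.coeff 1 + q.coeff 2 * r.coeff 0 := by
    simp [coeff_mul, Finset.Nat.antidiagonal_succ, add_assoc]
  simp only [pow_succ, pow_zero, one_mul, coeff_two_mul, mul_coeff_one, mul_coeff_zero, cubeDeriv]
  noncomm_ring

theorem pow_three_mem_coeffLTIdeal {I : TwoSidedIdeal R} (hI : ∀ a b : R, cubeDeriv a b ∈ I)
    {p : R[X]} (hp : p.coeff 0 ^ 3 ∈ I) : p ^ 3 ∈ coeffLTIdeal I 3 := by
  refine mem_coeffLTIdeal.2 fun n hn => ?_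
  interval_cases n
  · rwa [← constantCoeff_apply, map_pow]
  · exact coeff_one_pow_three p ▸ hI _ _
  · exact coeff_two_pow_three p ▸ I.add_mem (hI _ _) (hI _ _)

end Ring

variable {F : Type} [Field F] {d : ℕ}

theorem wordOf_nil : wordOf F d [] = 1 := rfl

theorem wordOf_cons (p : Ltr d) (l : List (Ltr d)) :
    wordOf F d (p :: l) = ι F p * wordOf F d l := by
  simp [wordOf]

@[elab_as_elim]
theorem wordOf_induction {P : FA F d → Prop} (word : ∀ l, P (wordOf F d l))
    (add : ∀ a b, P a → P b → P (a + b)) (smul : ∀ (r : F) a, P a → P (r • a)) (a : FA F d) :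
    P a := by
  have basis_eq : ⇑(FreeAlgebra.basisFreeMonoid F (Ltr d)) = wordOf F d := by
    ext1 l
    calc FreeAlgebra.basisFreeMonoid F (Ltr d) l = FreeMonoid.lift (ι F) l := by
          simp [FreeAlgebra.basisFreeMonoid, equivMonoidAlgebraFreeMonoid]
      _ = wordOf F d l := FreeMonoid.lift_apply (ι F) l
  have mem_span : a ∈ Submodule.span F (Set.range (wordOf F d)) :=
    basis_eq ▸ (FreeAlgebra.basisFreeMonoid F (Ltr d)).mem_span a
  induction mem_span using Submodule.span_induction with
  | mem _ h => obtain ⟨l, rfl⟩ := h; exact word l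
  | zero => simpa using smul 0 _ (word [])
  | add a b _ _ ha hb => exact add a b ha hb
  | smul r a _ ha => exact smul r a ha

theorem mem_MFsub_iff {a : FA F d} : a ∈ MFsub F d ↔ algebraMapInv a = 0 := by
  have algebraMapInv_wordOf_cons (p : Ltr d) (l : List (Ltr d)) :
      algebraMapInv (wordOf F d (p :: l)) = 0 := by
    simp [wordOf_cons, algebraMapInv]
  have sub_mem (a : FA F d) : a - algebraMap F _ (algebraMapInv a) ∈ MFsub F d := by
    induction a using wordOf_induction with
    | word l =>
      cases l with
      | nil => simp [wordOf_nil]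
      | cons p l =>
        rw [algebraMapInv_wordOf_cons, map_zero, sub_zero]
        exact Submodule.subset_span ⟨p :: l, List.cons_ne_nil p l, rfl⟩
    | add a b ha hb =>
      simpa only [map_add, add_sub_add_comm] using add_mem ha hb
    | smul r a ha =>
      simpa [mul_sub, Algebra.smul_def] using Submodule.smul_mem _ r ha
  constructor
  · intro ha
    have le_ker : MFsub F d ≤ LinearMap.ker (algebraMapInv (R := F) (X := Ltr d)).toLinearMap := by
      refine Submodule.span_le.2 ?_
      rintro _ ⟨_ | ⟨p, l⟩, hl, rfl⟩
      · exact absurd rfl hl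
      · exact algebraMapInv_wordOf_cons p l
    exact le_ker ha
  · intro ha
    simpa only [ha, map_zero, sub_zero] using sub_mem a

theorem tp_one : tp F d 1 = 1 := by simp [tp]

theorem tp_mul (a b : FA F d) : tp F d (a * b) = tp F d b * tp F d a := by simp [tp]

theorem tp_add (a b : FA F d) : tp F d (a + b) = tp F d a + tp F d b := by simp [tp]

theorem tp_smul (r : F) (a : FA F d) : tp F d (r • a) = r • tp F d a := by simp [tp]

theorem tp_ι (p : Ltr d) : tp F d (ι F p) = ι F (p.1, !p.2) := by simp [tp]

theorem tp_wordOf (l : List (Ltr d)) :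
    tp F d (wordOf F d l) = wordOf F d (l.map fun p => (p.1, !p.2)).reverse := by
  induction l with
  | nil => exact tp_one
  | cons p l ih => rw [wordOf_cons, tp_mul, ih, tp_ι]; simp [wordOf]

theorem bar_one : bar F d 1 = 0 := by rw [bar, tp_one, sub_self]

theorem bar_add (a b : FA F d) : bar F d (a + b) = bar F d a + bar F d b := by
  rw [bar, tp_add, add_sub_add_comm]; rfl

theorem bar_smul (r : F) (a : FA F d) : bar F d (r • a) = r • bar F d a := by
  rw [bar, tp_smul, ← smul_sub]; rfl

theorem Trel_add_left (a a' b c : FA F d) :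
    Trel F d (a + a') b c = Trel F d a b c + Trel F d a' b c := by
  simp only [Trel, tp_add, add_mul, mul_add]; abel

theorem Trel_add_middle (a b b' c : FA F d) :
    Trel F d a (b + b') c = Trel F d a b c + Trel F d a b' c := by
  simp only [Trel, bar_add, add_mul, mul_add]; abel

theorem Trel_add_right (a b c c' : FA F d) :
    Trel F d a b (c + c') = Trel F d a b c + Trel F d a b c' := by
  simp only [Trel, bar_add, add_mul, mul_add]; abel

theorem Trel_smul_left (r : F) (a b c : FA F d) :
    Trel F d (r • a) b c = r • Trel F d a b c := by
  simp only [Trel, tp_smul, smul_mul_assoc, mul_smul_comm, smul_add]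

theorem Trel_smul_middle (r : F) (a b c : FA F d) :
    Trel F d a (r • b) c = r • Trel F d a b c := by
  simp only [Trel, bar_smul, smul_mul_assoc, mul_smul_comm, smul_add]

theorem Trel_smul_right (r : F) (a b c : FA F d) :
    Trel F d a b (r • c) = r • Trel F d a b c := by
  simp only [Trel, bar_smul, smul_mul_assoc, mul_smul_comm, smul_add]

theorem Trel_mem_of_forall_wordOf {P : Submodule F (FA F d)}
    (hP : ∀ k l m, Trel F d (wordOf F d k) (wordOf F d l) (wordOf F d m) ∈ P) (a b c : FA F d) :
    Trel F d a b c ∈ P := by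
  induction a using wordOf_induction with
  | add a a' ha ha' => exact Trel_add_left a a' b c ▸ P.add_mem ha ha'
  | smul r a ha => exact Trel_smul_left r a b c ▸ P.smul_mem r ha
  | word k =>
    induction b using wordOf_induction with
    | add b b' hb hb' => exact Trel_add_middle _ b b' c ▸ P.add_mem hb hb'
    | smul r b hb => exact Trel_smul_middle r _ b c ▸ P.smul_mem r hb
    | word l =>
      induction c using wordOf_induction with
      | add c c' hc hc' => exact Trel_add_right _ _ c c' ▸ P.add_mem hc hc'
      | smul r c hc => exact Trel_smul_right r _ _ c ▸ P.smul_mem r hc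
      | word m => exact hP k l m

theorem Trel_one_left [CharP F 3] (b c : FA F d) : Trel F d 1 b c = 0 := by
  have three_eq_zero : (3 : FA F d) = 0 := CharP.cast_eq_zero (FA F d) 3
  calc Trel F d 1 b c = 3 * (bar F d b * bar F d c) := by
        rw [Trel, tp_one]; noncomm_ring
    _ = 0 := by rw [three_eq_zero, zero_mul]

theorem Trel_one_middle (a c : FA F d) : Trel F d a 1 c = 0 := by simp [Trel, bar_one]

theorem Trel_one_right (a b : FA F d) : Trel F d a b 1 = 0 := by simp [Trel, bar_one]

/-- The substitution `x_i ↦ X`, `x_iᵀ ↦ X` of a central variable, all other letters fixed; it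
records in the exponent of `X` the degree in `x_i` that `piMap` forgets. -/
noncomputable def substX (i : Fin d) : FA F d →ₐ[F] (FA F d)[X] :=
  FreeAlgebra.lift F fun p : Ltr d => if p.1 = i then X else C (ι F p)

theorem substX_ι (i : Fin d) (p : Ltr d) :
    substX i (ι F p) = if p.1 = i then X else C (ι F p) := by
  simp [substX]

theorem piMap_ι (i : Fin d) (p : Ltr d) :
    piMap F d i (ι F p) = if p.1 = i then 1 else ι F p := by
  simp [piMap]

theorem substX_wordOf (i : Fin d) (l : List (Ltr d)) :
    substX i (wordOf F d l) =
      monomial ((l.map Prod.fst).count i) (piMap F d i (wordOf F d l)) := by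
  induction l with
  | nil => simp [wordOf_nil]
  | cons p l ih =>
    rw [wordOf_cons, map_mul, map_mul, ih, substX_ι, piMap_ι]
    by_cases hp : p.1 = i
    · simp [hp, X_mul_monomial]
    · simp [hp, C_mul_monomial]

theorem tp_piMap (i : Fin d) (a : FA F d) : tp F d (piMap F d i a) = piMap F d i (tp F d a) := by
  induction a using FreeAlgebra.induction with
  | grade0 r => simp [tp]
  | grade1 p => rw [piMap_ι, tp_ι, piMap_ι]; split_ifs; exacts [tp_one, tp_ι p]
  | mul a b ha hb => simp only [map_mul, tp_mul, ha, hb]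
  | add a b ha hb => simp only [map_add, tp_add, ha, hb]

theorem substX_tp_wordOf (i : Fin d) (l : List (Ltr d)) :
    substX i (tp F d (wordOf F d l)) =
      monomial ((l.map Prod.fst).count i) (tp F d (piMap F d i (wordOf F d l))) := by
  rw [tp_piMap, tp_wordOf, substX_wordOf]
  simp [Function.comp_def]

theorem substX_bar_wordOf (i : Fin d) (l : List (Ltr d)) :
    substX i (bar F d (wordOf F d l)) =
      monomial ((l.map Prod.fst).count i) (bar F d (piMap F d i (wordOf F d l))) := by
  rw [bar, map_sub, substX_wordOf, substX_tp_wordOf, ← map_sub]; rfl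

theorem substX_Trel_wordOf (i : Fin d) (k l m : List (Ltr d)) :
    substX i (Trel F d (wordOf F d k) (wordOf F d l) (wordOf F d m)) =
      monomial ((k.map Prod.fst).count i + (l.map Prod.fst).count i + (m.map Prod.fst).count i)
        (Trel F d (piMap F d i (wordOf F d k)) (piMap F d i (wordOf F d l))
          (piMap F d i (wordOf F d m))) := by
  simp only [Trel, map_add, map_mul, substX_wordOf, substX_tp_wordOf, substX_bar_wordOf,
    monomial_mul_monomial]
  congr 3 <;> ac_rfl

theorem coeff_zero_substX_mem_MFsub (i : Fin d) {a : FA F d} (ha : a ∈ MFsub F d) :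
    (substX i a).coeff 0 ∈ MFsub F d := by
  have algebraMapInv_coeff_zero :
      algebraMapInv ((substX i a).coeff 0) = algebraMapInv a := by
    clear ha
    induction a using FreeAlgebra.induction with
    | grade0 r => rw [AlgHom.commutes, Polynomial.algebraMap_apply, coeff_C_zero]
    | grade1 p => rw [substX_ι]; split_ifs <;> simp [algebraMapInv]
    | mul a b ha hb => rw [map_mul, mul_coeff_zero, map_mul, map_mul, ha, hb]
    | add a b ha hb => rw [map_add, coeff_add, map_add, map_add, ha, hb]
  rw [mem_MFsub_iff, algebraMapInv_coeff_zero, mem_MFsub_iff.1 ha]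

theorem sum_range_coeff_substX (i : Fin d) {N : ℕ} {e : FA F d}
    (he : e ∈ Submodule.span F {w : FA F d | ∃ l : List (Ltr d),
      (l.map Prod.fst).count i < N ∧ w = wordOf F d l}) :
    ∑ n ∈ Finset.range N, (substX i e).coeff n = piMap F d i e := by
  induction he using Submodule.span_induction with
  | mem _ h =>
    obtain ⟨l, hl, rfl⟩ := h
    simp [substX_wordOf, coeff_monomial, hl]
  | zero => simp
  | add a b _ _ ha hb => simp only [map_add, coeff_add, Finset.sum_add_distrib, ha, hb]
  | smul r a _ ha => simp only [map_smul, coeff_smul, ← Finset.smul_sum, ha]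

theorem pow_three_mem_idealA {a : FA F d} (ha : a ∈ MFsub F d) : a ^ 3 ∈ idealA F d :=
  TwoSidedIdeal.subset_span (.inl ⟨a, ha, rfl⟩)

section CharThree

variable [CharP F 3]

theorem pow_three_sub_algebraMapInv_mem_idealA (a : FA F d) :
    a ^ 3 - algebraMap F _ (algebraMapInv a ^ 3) ∈ idealA F d := by
  have sub_mem : a - algebraMap F _ (algebraMapInv a) ∈ MFsub F d := by
    simp [mem_MFsub_iff, AlgHom.commutes]
  rw [map_pow, ← sub_pow_char_of_commute 3 (Algebra.commute_algebraMap_right _ a)]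
  exact pow_three_mem_idealA sub_mem

theorem add_pow_three_sub_mem_idealA (a b : FA F d) :
    (a + b) ^ 3 - a ^ 3 - b ^ 3 ∈ idealA F d := by
  have h := (idealA F d).sub_mem ((idealA F d).sub_mem
    (pow_three_sub_algebraMapInv_mem_idealA (a + b)) (pow_three_sub_algebraMapInv_mem_idealA a))
    (pow_three_sub_algebraMapInv_mem_idealA b)
  rw [map_add, add_pow_char, map_add] at h
  convert h using 1
  abel

theorem cubeDeriv_mem_idealA (a b : FA F d) : cubeDeriv a b ∈ idealA F d :=
  cubeDeriv_mem_of_add_pow_three_sub_mem add_pow_three_sub_mem_idealA a b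

theorem Trel_wordOf_mem_idealA (k l m : List (Ltr d)) :
    Trel F d (wordOf F d k) (wordOf F d l) (wordOf F d m) ∈ idealA F d := by
  have mem_MFsub {l : List (Ltr d)} (hl : l ≠ []) : wordOf F d l ∈ MFsub F d :=
    Submodule.subset_span ⟨l, hl, rfl⟩
  rcases eq_or_ne k [] with rfl | hk
  · rw [wordOf_nil, Trel_one_left]; exact zero_mem _
  rcases eq_or_ne l [] with rfl | hl
  · rw [wordOf_nil, Trel_one_middle]; exact zero_mem _
  rcases eq_or_ne m [] with rfl | hm
  · rw [wordOf_nil, Trel_one_right]; exact zero_mem _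
  exact TwoSidedIdeal.subset_span
    (.inr ⟨_, mem_MFsub hk, _, mem_MFsub hl, _, mem_MFsub hm, rfl⟩)

theorem Trel_mem_idealA (a b c : FA F d) : Trel F d a b c ∈ idealA F d :=
  Trel_mem_of_forall_wordOf (P := (idealA F d).asIdeal.restrictScalars F)
    Trel_wordOf_mem_idealA a b c

theorem substX_Trel_mem (i : Fin d) (N : ℕ) (a b c : FA F d) :
    substX i (Trel F d a b c) ∈ coeffLTIdeal (idealA F d) N := by
  let P : Submodule F (FA F d) :=
    ((coeffLTIdeal (idealA F d) N).comap (substX i)).asIdeal.restrictScalars F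
  have mem_P {x : FA F d} : x ∈ P ↔ substX i x ∈ coeffLTIdeal (idealA F d) N :=
    (TwoSidedIdeal.mem_asIdeal (R := FA F d)).trans (TwoSidedIdeal.mem_comap (substX i))
  refine mem_P.1 (Trel_mem_of_forall_wordOf (fun k l m => mem_P.2 ?_) a b c)
  rw [substX_Trel_wordOf]
  exact monomial_mem_coeffLTIdeal (Trel_mem_idealA _ _ _) _ N

theorem substX_mem_of_mem_idealA (i : Fin d) {a : FA F d} (ha : a ∈ idealA F d) :
    substX i a ∈ coeffLTIdeal (idealA F d) 3 := by
  have le_comap : idealA F d ≤ (coeffLTIdeal (idealA F d) 3).comap (substX i) := by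
    refine TwoSidedIdeal.span_le.2 ?_
    rintro _ (⟨a, ha, rfl⟩ | ⟨a, -, b, -, c, -, rfl⟩)
    · refine (TwoSidedIdeal.mem_comap (substX i)).2 ?_
      rw [map_pow]
      exact pow_three_mem_coeffLTIdeal cubeDeriv_mem_idealA
        (pow_three_mem_idealA (coeff_zero_substX_mem_MFsub i ha))
    · exact (TwoSidedIdeal.mem_comap (substX i)).2 (substX_Trel_mem i 3 a b c)
  exact (TwoSidedIdeal.mem_comap (substX i)).1 (le_comap ha)

theorem stmt9_general (i : Fin d) {e : FA F d}
    (he : e ∈ Submodule.span F {w : FA F d | ∃ l : List (Ltr d),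
      (l.map Prod.fst).count i < 3 ∧ w = wordOf F d l})
    (h0 : e ∈ idealA F d) : piMap F d i e ∈ idealA F d := by
  rw [← sum_range_coeff_substX i he]
  exact sum_mem fun n hn =>
    mem_coeffLTIdeal.1 (substX_mem_of_mem_idealA i h0) n (Finset.mem_range.1 hn)

end CharThree

end

/-- if `char F = 3`, `e ∈ M_F` is multihomogeneous of multidegree `δ` with
`δ_i < 3` and `Σ_{j ≠ i} δ_j > 0`, and `e = 0` in `A_{3,d}`, then `π_i(e) = 0` in `A_{3,d}`. -/
theorem stmt9 (F : Type) [Field F] [Infinite F] [CharP F 3] (d : ℕ) (i : Fin d)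
    (δ : Fin d → ℕ) (hδi : δ i < 3) (hpos : 0 < ∑ j ∈ Finset.univ.erase i, δ j)
    (e : FA F d)
    (he : e ∈ Submodule.span F {w : FA F d | ∃ l : List (Ltr d), l ≠ [] ∧
        (∀ k : Fin d, (l.map Prod.fst).count k = δ k) ∧ w = wordOf F d l})
    (h0 : e ∈ idealA F d) :
    piMap F d i e ∈ idealA F d := by
  refine stmt9_general i (Submodule.span_mono ?_ he) h0
  exact fun _ ⟨l, _, hl, hw⟩ => ⟨l, (hl i).trans_lt hδi, hw⟩
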